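/- Duality for multiple zeta values with double tails: let n,m be nonnegative integers and let k=(k_1,…,k_a) be a nonempty admissible index. Then ζ_{n,m}(k) = ζ_{m,n}(k†), where both series converge. -/

import Mathlib

open scoped Classical ENNReal

noncomputable section

/-- Last value of a tuple, with default `d` for the empty tuple. -/
def lastD {c : ℕ} (d : ℕ) (f : Fin c → ℕ) : ℕ :=
  if h : 0 < c then f ⟨c - 1, Nat.sub_lt h Nat.one_pos⟩ else d

/-- The multiple zeta value with double tails
`ζ_{n,m}(k) = Σ_{n < n₁ < ⋯ < nₐ} (∏ nᵢ^(-kᵢ)) / binom(nₐ + m, m)`,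
as a sum of nonnegative terms valued in `[0,∞]`. -/
def zetaTail (n m : ℕ) (k : List ℕ) : ℝ≥0∞ :=
  ∑' f : Fin k.length → ℕ,
    Set.indicator {f : Fin k.length → ℕ | (∀ i, n < f i) ∧ StrictMono f}
      (fun f => (∏ i, ((f i : ℝ≥0∞) ^ k.get i)⁻¹) *
        ((Nat.choose (lastD n f + m) m : ℝ≥0∞))⁻¹) f

/-- The word (over the alphabet `{x, y}`, encoded with `y = true`, `x = false`)
attached to an index: `w(k) = y x^(k₁-1) y x^(k₂-1) ⋯ y x^(kₐ-1)`. -/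
def word (k : List ℕ) : List Bool :=
  k.flatMap fun ki => true :: List.replicate (ki - 1) false

/-- The index attached to a word (left inverse of `word` on words beginning with `y`). -/
def wordToIndex (w : List Bool) : List ℕ :=
  w.foldl (fun acc b => if b then acc.concat 1 else acc.dropLast.concat (acc.getLast! + 1)) []

/-- The dual index `k†` of an admissible index `k`: reverse the word of `k`
and exchange the letters `x` and `y`. -/
def dual (k : List ℕ) : List ℕ :=
  wordToIndex (((word k).reverse).map fun b => !b)

/-!
The proof is by connected sums. The connector `c(p, q) = p! q! / (p + q)!` is symmetric in `p` and
`q`, and `∑_{p > n} p⁻¹ c(p, q)` telescopes to `q⁻¹ c(n, q)`. Let a word act on functions of one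
variable, `x` by `g ↦ n⁻¹ g(n)` and `y` by `g ↦ ∑_{p > n} p⁻¹ g(p)`, so that `ζ_{n,m}(k)` is the
action of `w(k)` on `c(·, m)`, evaluated at `n`. The telescoping identity says that the action of
one letter on the first variable of `c` equals the action of the other letter on the second
variable. Since actions on different variables commute, the letters can be moved across one at a
time, which reverses the word and exchanges its letters.

For convergence, both letters preserve the bound `g(p) ≤ 2 c(p, 1)` for `p ≥ 1`, and the function
`p⁻¹ c(p, m)` produced by the final letter `x` of an admissible word satisfies it.
-/

open Filter Set
open scoped NNReal Topology

section Sums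

lemma inv_natCast_eq_coe {a : ℕ} (ha : a ≠ 0) : (a : ℝ≥0∞)⁻¹ = ((a : ℝ≥0)⁻¹ : ℝ≥0) := by
  rw [ENNReal.coe_inv (Nat.cast_ne_zero.2 ha), ENNReal.coe_natCast]

lemma tsum_Ioi_eq_tsum_add {M : Type*} [AddCommMonoid M] [TopologicalSpace M] (f : ℕ → M) (n : ℕ) :
    ∑' p : Ioi n, f p = ∑' i, f (i + (n + 1)) := by
  have hrange : range (· + (n + 1)) = Ioi n := by
    ext p
    refine ⟨?_, fun hp => ⟨p - (n + 1), Nat.sub_add_cancel hp⟩⟩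
    rintro ⟨i, rfl⟩
    exact Nat.le_add_left (n + 1) i
  rw [← hrange, tsum_range f (add_left_injective (n + 1))]

lemma tsum_Ioi_eq_of_telescope {f a : ℕ → ℝ≥0∞} {n : ℕ}
    (h : ∀ p ≥ n, f (p + 1) + a (p + 1) = a p) (ha : Tendsto a atTop (𝓝 0)) :
    ∑' p : Ioi n, f p = a n := by
  have hpartial (N : ℕ) : ∑ i ∈ Finset.range N, f (i + (n + 1)) + a (N + n) = a n := by
    induction N with
    | zero => simp
    | succ N ih =>
      rw [Finset.sum_range_succ, ← ih, ← h (N + n) (Nat.le_add_left n N), ← add_assoc,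
        ← add_assoc, add_right_comm N 1 n]
  have hlim := (ENNReal.tendsto_nat_tsum fun i => f (i + (n + 1))).add
    ((tendsto_add_atTop_iff_nat n).2 ha)
  simp only [hpartial, add_zero] at hlim
  rw [tsum_Ioi_eq_tsum_add]
  exact tendsto_nhds_unique hlim tendsto_const_nhds

lemma tsum_Ioi_inv_natCast_eq_top (n : ℕ) : ∑' p : Ioi n, ((p : ℕ) : ℝ≥0∞)⁻¹ = ∞ := by
  rw [tsum_Ioi_eq_tsum_add (fun p => (p : ℝ≥0∞)⁻¹)]
  have hcoe (i : ℕ) : ((i + (n + 1) : ℕ) : ℝ≥0∞)⁻¹ = (((i + (n + 1) : ℕ) : ℝ≥0)⁻¹ : ℝ≥0) :=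
    inv_natCast_eq_coe (by omega)
  simp_rw [hcoe]
  by_contra hne
  have hsummable := ENNReal.tsum_coe_ne_top_iff_summable.1 hne
  rw [NNReal.summable_nat_add_iff (f := fun p : ℕ => (p : ℝ≥0)⁻¹)] at hsummable
  exact Real.not_summable_natCast_inv (by simpa using NNReal.summable_coe.2 hsummable)

end Sums

section Connector

/-- The connector `p! q! / (p + q)!` of the connected sum method, written as the inverse of a
binomial coefficient so that `connector p m` is the tail factor of `zetaTail`. -/
def connector (p q : ℕ) : ℝ≥0∞ :=
  ((p + q).choose q : ℝ≥0∞)⁻¹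

lemma connector_comm (p q : ℕ) : connector p q = connector q p := by
  rw [connector, connector, add_comm q p, Nat.choose_symm_add]

lemma connector_zero_right (p : ℕ) : connector p 0 = 1 := by
  simp [connector]

lemma connector_le_one (p q : ℕ) : connector p q ≤ 1 :=
  ENNReal.inv_le_one.2 (mod_cast Nat.choose_pos (Nat.le_add_left q p))

lemma connector_le_inv {q : ℕ} (hq : q ≠ 0) (p : ℕ) : connector p q ≤ (p : ℝ≥0∞)⁻¹ := by
  have hp : p ≤ (p + q).choose q :=
    calc p ≤ (p + 1).choose p := by simp
      _ ≤ (p + q).choose p := Nat.choose_le_choose p (by omega)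
      _ = (p + q).choose q := Nat.choose_symm_add
  exact ENNReal.inv_le_inv.2 (mod_cast hp)

lemma inv_le_two_mul_connector_one {p : ℕ} (hp : p ≠ 0) :
    (p : ℝ≥0∞)⁻¹ ≤ 2 * connector p 1 := by
  rw [connector, Nat.choose_one_right, inv_natCast_eq_coe hp,
    inv_natCast_eq_coe (Nat.succ_ne_zero p)]
  have hp' : (1 : ℝ≥0) ≤ p := mod_cast Nat.one_le_iff_ne_zero.2 hp
  have hnnreal : (p : ℝ≥0)⁻¹ ≤ 2 * ((p + 1 : ℕ) : ℝ≥0)⁻¹ := by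
    rw [← div_eq_mul_inv, inv_eq_one_div, div_le_div_iff₀ (by positivity) (by positivity)]
    push_cast
    linarith
  exact_mod_cast hnnreal

lemma tendsto_connector {q : ℕ} (hq : q ≠ 0) : Tendsto (connector · q) atTop (𝓝 0) :=
  tendsto_of_tendsto_of_tendsto_of_le_of_le tendsto_const_nhds
    ENNReal.tendsto_inv_nat_nhds_zero (fun _ => zero_le) (connector_le_inv hq)

lemma inv_mul_connector_succ_add (p : ℕ) {q : ℕ} (hq : q ≠ 0) :
    ((p + 1 : ℕ) : ℝ≥0∞)⁻¹ * connector (p + 1) q + (q : ℝ≥0∞)⁻¹ * connector (p + 1) q =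
      (q : ℝ≥0∞)⁻¹ * connector p q := by
  have hchoose : (p + q).choose q * (p + 1 + q) = (p + 1 + q).choose q * (p + 1) := by
    have h := Nat.choose_mul_succ_eq (p + q) q
    rwa [add_right_comm, Nat.add_sub_cancel] at h
  have hpos : (p + q).choose q ≠ 0 := (Nat.choose_pos (Nat.le_add_left q p)).ne'
  have hpos' : (p + 1 + q).choose q ≠ 0 := (Nat.choose_pos (Nat.le_add_left q (p + 1))).ne'
  rw [connector, connector, inv_natCast_eq_coe p.succ_ne_zero, inv_natCast_eq_coe hq,
    inv_natCast_eq_coe hpos, inv_natCast_eq_coe hpos']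
  have hnnreal : ((p + 1 : ℕ) : ℝ≥0)⁻¹ * ((p + 1 + q).choose q : ℝ≥0)⁻¹ +
      (q : ℝ≥0)⁻¹ * ((p + 1 + q).choose q : ℝ≥0)⁻¹ = (q : ℝ≥0)⁻¹ * ((p + q).choose q : ℝ≥0)⁻¹ := by
    field_simp
    norm_cast
    linarith
  exact_mod_cast hnnreal

end Connector

section Words

/-- The action of a letter on functions of one variable: `y = true` acts by summation over the
tail with weight `p⁻¹`, and `x = false` by multiplication with `n⁻¹`, which is `∞` at `n = 0`. -/
def letterOp : Bool → (ℕ → ℝ≥0∞) → ℕ → ℝ≥0∞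
  | true, g, n => ∑' p : Ioi n, ((p : ℕ) : ℝ≥0∞)⁻¹ * g p
  | false, g, n => (n : ℝ≥0∞)⁻¹ * g n

/-- The action of a word on functions of one variable; its last letter acts first. -/
def wordOp (w : List Bool) (g : ℕ → ℝ≥0∞) : ℕ → ℝ≥0∞ :=
  w.foldr letterOp g

/-- The dual word: reverse the word and exchange its two letters. -/
def dualWord (w : List Bool) : List Bool :=
  w.reverse.map fun b => !b

lemma wordOp_cons (b : Bool) (w : List Bool) (g : ℕ → ℝ≥0∞) :
    wordOp (b :: w) g = letterOp b (wordOp w g) :=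
  rfl

lemma wordOp_append (v w : List Bool) (g : ℕ → ℝ≥0∞) :
    wordOp (v ++ w) g = wordOp v (wordOp w g) :=
  List.foldr_append

lemma wordOp_replicate_false (r : ℕ) (g : ℕ → ℝ≥0∞) (n : ℕ) :
    wordOp (List.replicate r false) g n = (n : ℝ≥0∞)⁻¹ ^ r * g n := by
  induction r with
  | zero => simp [wordOp]
  | succ r ih => rw [List.replicate_succ, wordOp_cons, letterOp, ih, pow_succ', mul_assoc]

lemma dualWord_cons (b : Bool) (w : List Bool) : dualWord (b :: w) = dualWord w ++ [!b] := by
  simp [dualWord]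

lemma letterOp_comm (b c : Bool) (H : ℕ → ℕ → ℝ≥0∞) (n m : ℕ) :
    letterOp b (fun p => letterOp c (H p) m) n =
      letterOp c (fun q => letterOp b (fun p => H p q) n) m := by
  cases b <;> cases c <;>
    simp only [letterOp, ← ENNReal.tsum_mul_left, mul_left_comm (_ : ℝ≥0∞)⁻¹ (_ : ℝ≥0∞)⁻¹]
  rw [ENNReal.tsum_comm]
  exact tsum_congr fun q => tsum_congr fun p => mul_left_comm _ _ _

lemma letterOp_wordOp_comm (b : Bool) (w : List Bool) (H : ℕ → ℕ → ℝ≥0∞) (n m : ℕ) :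
    letterOp b (fun p => wordOp w (H p) m) n =
      wordOp w (fun q => letterOp b (fun p => H p q) n) m := by
  induction w generalizing m with
  | nil => rfl
  | cons c w ih =>
    simp only [wordOp_cons, ← funext ih]
    exact letterOp_comm b c (fun p => wordOp w (H p)) n m

-- At `q = 0` the left side is a tail of the harmonic series and the right side is `0⁻¹ = ∞`.
lemma letterOp_true_connector (n q : ℕ) :
    letterOp true (connector · q) n = (q : ℝ≥0∞)⁻¹ * connector n q := by
  rcases eq_or_ne q 0 with rfl | hq
  · simp [letterOp, connector_zero_right, tsum_Ioi_inv_natCast_eq_top]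
  · have hlim : Tendsto (fun p => (q : ℝ≥0∞)⁻¹ * connector p q) atTop (𝓝 0) := by
      simpa using ENNReal.Tendsto.const_mul (tendsto_connector hq) (Or.inr (by simpa using hq))
    exact tsum_Ioi_eq_of_telescope (f := fun p => (p : ℝ≥0∞)⁻¹ * connector p q)
      (fun p _ => inv_mul_connector_succ_add p hq) hlim

lemma letterOp_connector_eq_letterOp_not (b : Bool) (n q : ℕ) :
    letterOp b (connector · q) n = letterOp (!b) (connector n) q := by
  cases b with
  | false =>
    rw [Bool.not_false, funext (connector_comm n), letterOp_true_connector, connector_comm q n]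
    rfl
  | true => exact letterOp_true_connector n q

theorem wordOp_connector_eq_wordOp_dualWord (w : List Bool) (n m : ℕ) :
    wordOp w (connector · m) n = wordOp (dualWord w) (connector n) m := by
  induction w generalizing n with
  | nil => rfl
  | cons b w ih =>
    calc wordOp (b :: w) (connector · m) n
      _ = letterOp b (fun p => wordOp (dualWord w) (connector p) m) n := by
        rw [wordOp_cons, funext ih]
      _ = wordOp (dualWord w) (fun q => letterOp b (connector · q) n) m :=
        letterOp_wordOp_comm b (dualWord w) connector n m
      _ = wordOp (dualWord (b :: w)) (connector n) m := by
        simp only [letterOp_connector_eq_letterOp_not, dualWord_cons, wordOp_append]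
        rfl

end Words

section Convergence

variable {g : ℕ → ℝ≥0∞} {C : ℝ≥0∞} {q : ℕ}

lemma letterOp_true_le_mul_connector (hq : q ≠ 0) (hg : ∀ p ≠ 0, g p ≤ C * connector p q) (n : ℕ) :
    letterOp true g n ≤ C * connector n q :=
  calc letterOp true g n
    _ ≤ ∑' p : Ioi n, ((p : ℕ) : ℝ≥0∞)⁻¹ * (C * connector p q) :=
      ENNReal.tsum_le_tsum fun p => by gcongr; exact hg p (Nat.ne_zero_of_lt p.2)
    _ = C * letterOp true (connector · q) n := by
      simp only [letterOp, ← ENNReal.tsum_mul_left, mul_left_comm C]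
    _ = C * ((q : ℝ≥0∞)⁻¹ * connector n q) := by rw [letterOp_true_connector]
    _ ≤ C * connector n q := by
      gcongr
      exact mul_le_of_le_one_left' (ENNReal.inv_le_one.2 (mod_cast Nat.one_le_iff_ne_zero.2 hq))

lemma wordOp_le_mul_connector (hq : q ≠ 0) (hg : ∀ p ≠ 0, g p ≤ C * connector p q) (w : List Bool) :
    ∀ p ≠ 0, wordOp w g p ≤ C * connector p q := by
  induction w with
  | nil => exact hg
  | cons b w ih =>
    intro p hp
    cases b with
    | false =>
      have hinv : (p : ℝ≥0∞)⁻¹ ≤ 1 := ENNReal.inv_le_one.2 (mod_cast Nat.one_le_iff_ne_zero.2 hp)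
      exact (mul_le_of_le_one_left' hinv).trans (ih p hp)
    | true => exact letterOp_true_le_mul_connector hq ih p

theorem wordOp_connector_ne_top (w : List Bool) (n m : ℕ) :
    wordOp (true :: (w ++ [false])) (connector · m) n ≠ ∞ := by
  have hlast (p : ℕ) (hp : p ≠ 0) :
      letterOp false (connector · m) p ≤ 2 * connector p 1 :=
    (mul_le_of_le_one_right' (connector_le_one p m)).trans (inv_le_two_mul_connector_one hp)
  have hbound : wordOp (true :: (w ++ [false])) (connector · m) n ≤ 2 * connector n 1 := by
    rw [wordOp_cons, wordOp_append]
    exact letterOp_true_le_mul_connector one_ne_zero (wordOp_le_mul_connector one_ne_zero hlast w) n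
  refine ne_top_of_le_ne_top (ENNReal.mul_ne_top ENNReal.ofNat_ne_top ?_) hbound
  exact ne_top_of_le_ne_top ENNReal.one_ne_top (connector_le_one n 1)

end Convergence

section Indices

lemma word_cons (a : ℕ) (k : List ℕ) :
    word (a :: k) = true :: (List.replicate (a - 1) false ++ word k) :=
  rfl

lemma word_append (k l : List ℕ) : word (k ++ l) = word k ++ word l :=
  List.flatMap_append

lemma word_append_singleton_succ (k : List ℕ) {a : ℕ} (ha : 1 ≤ a) :
    word (k ++ [a + 1]) = word (k ++ [a]) ++ [false] := by
  obtain ⟨b, rfl⟩ := Nat.exists_eq_add_of_le' ha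
  simp [word, List.replicate_succ']

lemma exists_word_eq_cons {k : List ℕ} (hk : k ≠ []) : ∃ w, word k = true :: w := by
  obtain ⟨a, l, rfl⟩ := List.exists_cons_of_ne_nil hk
  exact ⟨_, word_cons a l⟩

lemma exists_word_eq_of_two_le_getLast {k : List ℕ} (hk : k ≠ []) (hka : 2 ≤ k.getLast hk) :
    ∃ w, word k = true :: (w ++ [false]) := by
  obtain ⟨a, ha⟩ := Nat.exists_eq_add_of_le' hka
  obtain ⟨w, hw⟩ := exists_word_eq_cons (k := k.dropLast ++ [a + 1]) (by simp)
  refine ⟨w, ?_⟩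
  rw [← List.cons_append, ← hw, ← word_append_singleton_succ _ (Nat.le_add_left 1 a), ← ha,
    List.dropLast_append_getLast]

lemma wordToIndex_append_true (w : List Bool) :
    wordToIndex (w ++ [true]) = wordToIndex w ++ [1] := by
  simp [wordToIndex]

lemma wordToIndex_append_false (w : List Bool) :
    wordToIndex (w ++ [false]) =
      (wordToIndex w).dropLast ++ [(wordToIndex w).getLast! + 1] := by
  simp [wordToIndex]

lemma one_le_of_mem_wordToIndex {w : List Bool} : ∀ i ∈ wordToIndex w, 1 ≤ i := by
  induction w using List.reverseRecOn with
  | nil => simp [wordToIndex]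
  | append_singleton w b ih =>
    intro i hi
    cases b with
    | true =>
      rw [wordToIndex_append_true, List.mem_append, List.mem_singleton] at hi
      exact hi.elim (ih i) fun h => h.ge
    | false =>
      rw [wordToIndex_append_false, List.mem_append, List.mem_singleton] at hi
      exact hi.elim (fun h => ih i (List.mem_of_mem_dropLast h)) fun h => by omega

lemma word_wordToIndex_true_cons (w : List Bool) :
    word (wordToIndex (true :: w)) = true :: w := by
  induction w using List.reverseRecOn with
  | nil => rfl
  | append_singleton w b ih =>
    rw [← List.cons_append]
    cases b with
    | true =>
      rw [wordToIndex_append_true, word_append, ih]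
      rfl
    | false =>
      have hne : wordToIndex (true :: w) ≠ [] := fun h => by simp [h, word] at ih
      have hlast := one_le_of_mem_wordToIndex _ (List.getLast_mem hne)
      rw [wordToIndex_append_false,
        List.getLast!_of_getLast? (List.getLast?_eq_getLast_of_ne_nil hne),
        word_append_singleton_succ _ hlast, List.dropLast_append_getLast, ih]

lemma word_dual {k : List ℕ} (hk : k ≠ []) (hka : 2 ≤ k.getLast hk) :
    word (dual k) = dualWord (word k) := by
  obtain ⟨w, hw⟩ := exists_word_eq_of_two_le_getLast hk hka
  have hdual : dualWord (word k) = true :: dualWord (true :: w) := by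
    simp [hw, dualWord]
  calc word (dual k)
    _ = word (wordToIndex (dualWord (word k))) := rfl
    _ = dualWord (word k) := by rw [hdual, word_wordToIndex_true_cons]

end Indices

section ZetaTail

lemma lastD_cons {c : ℕ} (d p : ℕ) (f : Fin c → ℕ) :
    lastD d (Fin.cons p f : Fin (c + 1) → ℕ) = lastD p f := by
  cases c with
  | zero => simp [lastD]
  | succ c =>
    rw [lastD, lastD, dif_pos (Nat.succ_pos _), dif_pos (Nat.succ_pos _)]
    exact Fin.cons_succ (α := fun _ => ℕ) p f (Fin.last c)

lemma lt_and_strictMono_cons_iff {c n p : ℕ} {f : Fin c → ℕ} :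
    ((∀ i, n < (Fin.cons p f : Fin (c + 1) → ℕ) i) ∧
        StrictMono (Fin.cons p f : Fin (c + 1) → ℕ)) ↔
      n < p ∧ (∀ i, p < f i) ∧ StrictMono f := by
  rw [Fin.strictMono_cons, Fin.forall_fin_succ]
  simp only [Fin.cons_zero, Fin.cons_succ]
  exact ⟨fun h => ⟨h.1.1, h.2⟩, fun h => ⟨⟨h.1, fun i => h.1.trans (h.2.1 i)⟩, h.2⟩⟩

/-- The summand of `zetaTail n m k`, extended by zero to all tuples. -/
def zetaTerm (n m : ℕ) (k : List ℕ) : (Fin k.length → ℕ) → ℝ≥0∞ :=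
  indicator {f | (∀ i, n < f i) ∧ StrictMono f} fun f =>
    (∏ i, ((f i : ℝ≥0∞) ^ k.get i)⁻¹) * ((lastD n f + m).choose m : ℝ≥0∞)⁻¹

lemma zetaTerm_cons (n m a p : ℕ) (k : List ℕ) (f : Fin k.length → ℕ) :
    zetaTerm n m (a :: k) (Fin.cons p f : Fin (k.length + 1) → ℕ) =
      (Ioi n).indicator (fun p => (p : ℝ≥0∞)⁻¹ ^ a * zetaTerm p m k f) p := by
  have hprod : ∏ i, (((Fin.cons p f : Fin (k.length + 1) → ℕ) i : ℝ≥0∞) ^ (a :: k).get i)⁻¹ =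
      (p : ℝ≥0∞)⁻¹ ^ a * ∏ i, ((f i : ℝ≥0∞) ^ k.get i)⁻¹ := by
    rw [Fin.prod_univ_succ]
    simp [ENNReal.inv_pow]
  simp only [zetaTerm, indicator_apply, mem_Ioi, mem_ofPred_eq]
  refine (if_congr lt_and_strictMono_cons_iff rfl rfl).trans ?_
  rw [ite_and, mul_ite, mul_zero, ← mul_assoc, ← hprod, ← lastD_cons n p f]
  rfl

lemma zetaTail_nil (n m : ℕ) : zetaTail n m [] = connector n m := by
  have hmem (f : Fin ([] : List ℕ).length → ℕ) : (∀ i, n < f i) ∧ StrictMono f :=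
    ⟨fun i => i.elim0, fun i => i.elim0⟩
  simp [zetaTail, hmem, lastD, connector]

lemma zetaTail_cons (n m a : ℕ) (k : List ℕ) :
    zetaTail n m (a :: k) = ∑' p : Ioi n, ((p : ℕ) : ℝ≥0∞)⁻¹ ^ a * zetaTail p m k := by
  let e : ℕ × (Fin k.length → ℕ) ≃ (Fin (a :: k).length → ℕ) := Fin.consEquiv fun _ => ℕ
  calc zetaTail n m (a :: k)
    _ = ∑' (p) (f : Fin k.length → ℕ), zetaTerm n m (a :: k) (e (p, f)) := by
      rw [← ENNReal.tsum_prod, e.tsum_eq]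
      rfl
    _ = ∑' (p) (f : Fin k.length → ℕ),
        (Ioi n).indicator (fun p => (p : ℝ≥0∞)⁻¹ ^ a * zetaTerm p m k f) p :=
      tsum_congr fun p => tsum_congr fun f => zetaTerm_cons n m a p k f
    _ = ∑' (f : Fin k.length → ℕ) (p : Ioi n),
        ((p : ℕ) : ℝ≥0∞)⁻¹ ^ a * zetaTerm p m k f := by
      rw [ENNReal.tsum_comm]
      exact tsum_congr fun f =>
        (tsum_subtype (Ioi n) fun p => (p : ℝ≥0∞)⁻¹ ^ a * zetaTerm p m k f).symm
    _ = ∑' p : Ioi n, ((p : ℕ) : ℝ≥0∞)⁻¹ ^ a * zetaTail p m k := by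
      rw [ENNReal.tsum_comm]
      exact tsum_congr fun p => ENNReal.tsum_mul_left

theorem zetaTail_eq_wordOp (n m : ℕ) {k : List ℕ} (hk : ∀ i ∈ k, 1 ≤ i) :
    zetaTail n m k = wordOp (word k) (connector · m) n := by
  induction k generalizing n with
  | nil => exact zetaTail_nil n m
  | cons a k ih =>
    have ha : a - 1 + 1 = a := Nat.sub_add_cancel (hk a List.mem_cons_self)
    rw [zetaTail_cons, word_cons, wordOp_cons, wordOp_append, letterOp]
    refine tsum_congr fun p => ?_
    rw [ih p fun i hi => hk i (List.mem_cons_of_mem a hi), wordOp_replicate_false, ← mul_assoc,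
      ← pow_succ', ha]

end ZetaTail

/-- **Duality for multiple zeta values with double tails.**
For nonnegative integers `n, m` and a nonempty admissible index `k`,
`ζ_{n,m}(k) = ζ_{m,n}(k†)`, and both (equal) series converge. -/
theorem duality_double_tails (n m : ℕ) (k : List ℕ)
    (hk : k ≠ []) (hk1 : ∀ i ∈ k, 1 ≤ i) (hka : 2 ≤ k.getLast hk) :
    zetaTail n m k = zetaTail m n (dual k) ∧ zetaTail n m k ≠ ∞ := by
  constructor
  · calc zetaTail n m k
      _ = wordOp (word k) (connector · m) n := zetaTail_eq_wordOp n m hk1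
      _ = wordOp (dualWord (word k)) (connector n) m :=
        wordOp_connector_eq_wordOp_dualWord (word k) n m
      _ = wordOp (word (dual k)) (connector · n) m := by
        rw [word_dual hk hka, funext (connector_comm n)]
      _ = zetaTail m n (dual k) := (zetaTail_eq_wordOp m n one_le_of_mem_wordToIndex).symm
  · obtain ⟨w, hw⟩ := exists_word_eq_of_two_le_getLast hk hka
    rw [zetaTail_eq_wordOp n m hk1, hw]
    exact wordOp_connector_ne_top w n m
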